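/- Let d = 1, δ ∈ (1,2), λ > 0. Then t ↦ D_{λ,δ}(t) is (absolutely) integrable on (0,∞), the spectral density \widehat{D}(z) = (1/π)∫₀^∞ cos(z t) D_{λ,δ}(t) dt is continuous at z = 0 (as a limit from the right), and lim_{z→0⁺} \widehat{D}(z) = (1/π) ∫₀^∞ D_{λ,δ}(t) dt = Γ(1 − 1/δ) Γ(1/δ + λ) / ( π Γ(λ) ). -/

import Mathlib

open MeasureTheory Set Filter

/-- The Dagum function with parameters `lam > 0`, `δ > 0`:
`D_{λ,δ}(r) = 1 - (r^δ/(1+r^δ))^λ`. -/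
noncomputable def dagum (lam δ r : ℝ) : ℝ := 1 - (r ^ δ / (1 + r ^ δ)) ^ lam

lemma dagum_meas (δ lam : ℝ) (hδ1 : 1 < δ) (hlam : 0 < lam) (t : ℝ) (ht : 0 < t) :
    ((volume.restrict (Ioo (0:ℝ) 1)).withDensity
      (fun x => ENNReal.ofReal (lam * x ^ (lam - 1)))) {x : ℝ | t < (x / (1 - x)) ^ (δ⁻¹)}
      = ENNReal.ofReal (dagum lam δ t) := by
  have hm : MeasurableSet {x : ℝ | t < (x / (1 - x)) ^ (δ⁻¹)} :=
    measurableSet_lt measurable_const (by fun_prop)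
  have hp : 0 < t ^ δ := Real.rpow_pos_of_pos ht δ
  have hU0 : 0 < t ^ δ / (1 + t ^ δ) := by positivity
  have hU1 : t ^ δ / (1 + t ^ δ) < 1 := by
    rw [div_lt_one (by positivity)]; linarith
  have hs : {x : ℝ | t < (x / (1 - x)) ^ (δ⁻¹)} ∩ Ioo 0 1 = Ioo (t ^ δ / (1 + t ^ δ)) 1 := by
    ext x
    have key : 0 < x → x < 1 → (t < (x / (1 - x)) ^ (δ⁻¹) ↔ t ^ δ / (1 + t ^ δ) < x) := by
      intro h0 h1
      have h2 : 0 < 1 - x := by linarith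
      rw [Real.lt_rpow_inv_iff_of_pos ht.le (by positivity) (by linarith), lt_div_iff₀ h2,
        div_lt_iff₀ (by positivity)]
      constructor <;> intro h <;> linarith
    simp only [mem_inter_iff, mem_ofPred_eq, mem_Ioo]
    constructor
    · rintro ⟨h, h0, h1⟩
      exact ⟨(key h0 h1).1 h, h1⟩
    · rintro ⟨h, h1⟩
      have h0 := hU0.trans h
      exact ⟨(key h0 h1).2 h, h0, h1⟩
  have hint : IntervalIntegrable (fun x : ℝ => lam * x ^ (lam - 1)) volume
      (t ^ δ / (1 + t ^ δ)) 1 :=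
    (intervalIntegral.intervalIntegrable_rpow' (by linarith)).const_mul _
  rw [withDensity_apply _ hm, Measure.restrict_restrict hm, hs,
    ← ofReal_integral_eq_lintegral_ofReal]
  · rw [← integral_Ioc_eq_integral_Ioo, ← intervalIntegral.integral_of_le hU1.le,
      intervalIntegral.integral_const_mul, integral_rpow (Or.inl (by linarith))]
    congr 1
    simp only [sub_add_cancel, Real.one_rpow, dagum]
    field_simp
  · rw [intervalIntegrable_iff_integrableOn_Ioc_of_le hU1.le] at hint
    exact hint.mono_set Ioo_subset_Ioc_self
  · refine ae_restrict_of_forall_mem measurableSet_Ioo (fun x hx => ?_)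
    have : 0 < x := hU0.trans hx.1
    simp only [Pi.zero_apply]
    positivity

lemma dagum_lintegral (δ lam : ℝ) (hδ1 : 1 < δ) (hlam : 0 < lam) :
    ∫⁻ t in Ioi (0:ℝ), ENNReal.ofReal (dagum lam δ t)
      = ENNReal.ofReal (lam * ProbabilityTheory.beta (1 / δ + lam) (1 - 1 / δ)) := by
  have hd : 1 / δ < 1 := by rw [div_lt_one (by linarith)]; exact hδ1
  have hd0 : 0 < 1 / δ := by positivity
  have hα : 0 < 1 / δ + lam := by positivity
  have hβ : 0 < 1 - 1 / δ := by linarith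
  have hB := ProbabilityTheory.beta_pos hα hβ
  have h := lintegral_eq_lintegral_meas_lt ((volume.restrict (Ioo (0:ℝ) 1)).withDensity
      (fun x => ENNReal.ofReal (lam * x ^ (lam - 1)))) (f := fun x : ℝ => (x / (1 - x)) ^ (δ⁻¹))
      (by
        refine (withDensity_absolutelyContinuous _ _).ae_le ?_
        refine ae_restrict_of_forall_mem measurableSet_Ioo (fun x hx => ?_)
        exact Real.rpow_nonneg (div_nonneg hx.1.le (by linarith [hx.2])) _)
      (Measurable.aemeasurable (by fun_prop))
  rw [setLIntegral_congr_fun measurableSet_Ioi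
    (fun t ht => dagum_meas δ lam hδ1 hlam t ht)] at h
  rw [← h, lintegral_withDensity_eq_lintegral_mul _ (by fun_prop) (by fun_prop)]
  have h1 := ProbabilityTheory.lintegral_betaPDF_eq_one hα hβ
  rw [ProbabilityTheory.lintegral_betaPDF] at h1
  rw [← mul_one (ENNReal.ofReal (lam * _)), ← h1, ← lintegral_const_mul _ (by fun_prop)]
  refine setLIntegral_congr_fun measurableSet_Ioo (fun x hx => ?_)
  have hx0 := hx.1
  have hx1 : 0 < 1 - x := by linarith [hx.2]
  simp only [Pi.mul_apply]
  rw [← ENNReal.ofReal_mul (by positivity), ← ENNReal.ofReal_mul (by positivity)]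
  congr 1
  rw [Real.div_rpow hx0.le hx1.le, ← one_div,
    show 1 / δ + lam - 1 = (lam - 1) + 1 / δ by ring, Real.rpow_add hx0,
    show 1 - 1 / δ - 1 = -(1 / δ) by ring, Real.rpow_neg hx1.le]
  generalize ProbabilityTheory.beta (1 / δ + lam) (1 - 1 / δ) = B at hB
  field_simp

lemma dagum_nonneg (δ lam : ℝ) (hlam : 0 < lam) (t : ℝ) (ht : 0 < t) :
    0 ≤ dagum lam δ t := by
  have hp : 0 < t ^ δ := Real.rpow_pos_of_pos ht δ
  have := Real.rpow_le_one (x := t ^ δ / (1 + t ^ δ)) (by positivity)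
    (by rw [div_le_one (by positivity)]; linarith) hlam.le
  unfold dagum; linarith

/-- For `d = 1`, `δ ∈ (1,2)` and `λ > 0`: the Dagum function is integrable on `(0,∞)`,
its spectral density `\widehat D(z) = (1/π)∫₀^∞ cos(zt) D_{λ,δ}(t) dt` is continuous at
`z = 0` from the right, and
`lim_{z→0⁺} \widehat D(z) = (1/π)∫₀^∞ D_{λ,δ}(t) dt = Γ(1-1/δ)Γ(1/δ+λ)/(π Γ(λ))`. -/
theorem dagum_spectral_density_continuous_at_zero (δ lam : ℝ) (hδ1 : 1 < δ) (hδ2 : δ < 2)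
    (hlam : 0 < lam) :
    IntegrableOn (fun t : ℝ => dagum lam δ t) (Ioi 0) ∧
    Tendsto (fun z : ℝ => (1 / Real.pi) * ∫ t in Ioi (0 : ℝ), Real.cos (z * t) * dagum lam δ t)
      (nhdsWithin 0 (Ioi 0))
      (nhds ((1 / Real.pi) * ∫ t in Ioi (0 : ℝ), dagum lam δ t)) ∧
    (1 / Real.pi) * ∫ t in Ioi (0 : ℝ), dagum lam δ t
      = Real.Gamma (1 - 1 / δ) * Real.Gamma (1 / δ + lam) / (Real.pi * Real.Gamma lam) := by
  have hmeas : Measurable (fun t : ℝ => dagum lam δ t) := by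
    unfold dagum; fun_prop
  have hnn : 0 ≤ᵐ[volume.restrict (Ioi (0:ℝ))] (fun t : ℝ => dagum lam δ t) :=
    ae_restrict_of_forall_mem measurableSet_Ioi (fun t ht => dagum_nonneg δ lam hlam t ht)
  have hL := dagum_lintegral δ lam hδ1 hlam
  have hint : IntegrableOn (fun t : ℝ => dagum lam δ t) (Ioi 0) := by
    refine ⟨hmeas.aestronglyMeasurable, ?_⟩
    rw [hasFiniteIntegral_iff_ofReal hnn, hL]
    exact ENNReal.ofReal_lt_top
  refine ⟨hint, ?_, ?_⟩
  · refine Tendsto.const_mul _ (Tendsto.mono_left ?_ nhdsWithin_le_nhds)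
    refine tendsto_integral_filter_of_dominated_convergence
      (fun t => ‖dagum lam δ t‖) ?_ ?_ hint.norm ?_
    · exact Eventually.of_forall fun z => Measurable.aestronglyMeasurable (by fun_prop)
    · refine Eventually.of_forall fun z => Eventually.of_forall fun t => ?_
      rw [norm_mul]
      exact mul_le_of_le_one_left (norm_nonneg _) (Real.abs_cos_le_one _)
    · refine Eventually.of_forall fun t => ?_
      have : Continuous (fun z : ℝ => Real.cos (z * t) * dagum lam δ t) := by fun_prop
      simpa using this.tendsto 0
  · have hd : 1 / δ < 1 := by rw [div_lt_one (by linarith)]; exact hδ1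
    have hd0 : 0 < 1 / δ := by positivity
    have hB := ProbabilityTheory.beta_pos (α := 1 / δ + lam) (β := 1 - 1 / δ)
      (by positivity) (by linarith)
    rw [integral_eq_lintegral_of_nonneg_ae hnn hmeas.aestronglyMeasurable, hL,
      ENNReal.toReal_ofReal (by positivity), ProbabilityTheory.beta,
      show 1 / δ + lam + (1 - 1 / δ) = lam + 1 by ring, Real.Gamma_add_one hlam.ne']
    have hG := (Real.Gamma_pos_of_pos hlam).ne'
    field_simp
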